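/- Let A be a C*-algebra, let α₁, α₂ : A → A be injective *-homomorphisms, and let P₁, P₂, L₁, L₂, L : A → A be maps satisfying: α₁ ∘ L₁ = P₁, α₂ ∘ L₂ = P₂, (α₁ ∘ α₂) ∘ L = P₁ ∘ P₂, P₁ ∘ P₂ = P₂ ∘ P₁, P₂ ∘ α₁ = α₁ ∘ P₂, and the bimodule property P₁(α₁(b)* x α₁(c)) = α₁(b)* P₁(x) α₁(c) for all b, c, x ∈ A. Then for all a₁, a₂, b₁, b₂ ∈ A one has L((a₁ α₁(b₁))* (a₂ α₁(b₂))) = L₂(b₁* L₁(a₁* a₂) b₂). -/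

import Mathlib

/-!
STATEMENT 8: For a C*-algebra `A`, injective *-homomorphisms `α₁, α₂ : A → A` and maps
`P₁, P₂, L₁, L₂, L : A → A` with `α₁ ∘ L₁ = P₁`, `α₂ ∘ L₂ = P₂`, `(α₁ ∘ α₂) ∘ L = P₁ ∘ P₂`,
`P₁ ∘ P₂ = P₂ ∘ P₁`, `P₂ ∘ α₁ = α₁ ∘ P₂` and the bimodule property
`P₁(α₁(b)* x α₁(c)) = α₁(b)* P₁(x) α₁(c)`, one has
`L((a₁ α₁(b₁))* (a₂ α₁(b₂))) = L₂(b₁* L₁(a₁* a₂) b₂)` for all `a₁ a₂ b₁ b₂`.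
-/

theorem inner_product_of_tensor_bimodule
    {A : Type*} [CStarAlgebra A]
    (α₁ α₂ : A →⋆ₐ[ℂ] A) (hα₁ : Function.Injective α₁) (hα₂ : Function.Injective α₂)
    (P₁ P₂ L₁ L₂ L : A → A)
    (hL₁ : ∀ x, α₁ (L₁ x) = P₁ x)
    (hL₂ : ∀ x, α₂ (L₂ x) = P₂ x)
    (hL : ∀ x, α₁ (α₂ (L x)) = P₁ (P₂ x))
    (hPP : ∀ x, P₁ (P₂ x) = P₂ (P₁ x))
    (hPα : ∀ x, P₂ (α₁ x) = α₁ (P₂ x))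
    (hbim : ∀ b c x : A, P₁ (star (α₁ b) * x * α₁ c) = star (α₁ b) * P₁ x * α₁ c) :
    ∀ a₁ a₂ b₁ b₂ : A,
      L (star (a₁ * α₁ b₁) * (a₂ * α₁ b₂)) = L₂ (star b₁ * L₁ (star a₁ * a₂) * b₂) := by
  intro a₁ a₂ b₁ b₂
  apply hα₂
  apply hα₁
  have e : star (a₁ * α₁ b₁) * (a₂ * α₁ b₂) = star (α₁ b₁) * (star a₁ * a₂) * α₁ b₂ := by
    simp only [star_mul, mul_assoc]
  rw [hL, hL₂, hPP, e, hbim, ← hPα, map_mul, map_mul, map_star, hL₁]
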